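/- Let X ∈ ES. For every X-regular blueprint π and every X-satisfiable elementary conjunction γ, there is a pointed X-model (M, s₀) realizing π and γ. -/

import Mathlib

/-!
The root of the realizing model copies the blueprint, and below it hang models of the listed
formulas. Choose for every `X`-satisfiable formula `χ` a pointed `X`-model `(N χ, p χ)` of `χ`,
take the disjoint union of all `N χ`, and add a root labelled as a state satisfying `γ`. At the
root a profile of blueprint actions leads to the points `p χ` of the formulas `χ` it lists; inside
`N χ` the game is unchanged. The action sets are kept disjoint, and a profile using a foreign
action has no outcome, hence is unavailable (`glue`).

Thus every state of the glued model carries an exact copy (`IsCopy`) of a game satisfying the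
requirements of `X`: that of some `N χ`, or that of the blueprint, which is one by regularity
(`bpFrame_locX`). Copies preserve these requirements (`IsCopy.locX`) and satisfaction inside `N χ`
(`sat_copy`), so a root outcome coming from `χ` satisfies all `X`-consequences of `χ`.
-/

namespace CL

/-- The language Φ of coalition logic over a set of agents, with atomic
propositions drawn from ℕ (a countable set). -/
inductive Formula (Agent : Type) : Type
  | top : Formula Agent
  | atom : ℕ → Formula Agent
  | neg : Formula Agent → Formula Agent
  | and : Formula Agent → Formula Agent → Formula Agent
  | coal : Set Agent → Formula Agent → Formula Agent

namespace Formula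

variable {Agent : Type}

def bot : Formula Agent := neg top

def or (φ ψ : Formula Agent) : Formula Agent := neg (and (neg φ) (neg ψ))

def imp (φ ψ : Formula Agent) : Formula Agent := or (neg φ) ψ

def iff (φ ψ : Formula Agent) : Formula Agent := and (imp φ ψ) (imp ψ φ)

end Formula

/-- The three frame properties: seriality, independence of agents, determinism.
`ES` is represented by `Set P3`, the eight subsets of {S, I, D}. -/
inductive P3 : Type
  | S | I | D
deriving DecidableEq
section
open Classical

/-- Merge of two joint actions of disjoint coalitions. -/
noncomputable def jaUnion {Agent Act : Type} {C D : Set Agent}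
    (σC : C → Act) (σD : D → Act) : ↥(C ∪ D) → Act :=
  fun a =>
    if h : a.1 ∈ C then σC ⟨a.1, h⟩
    else σD ⟨a.1, ((Set.mem_union _ _ _).mp a.2).resolve_left h⟩

end

/-- A general concurrent game frame: a nonempty set of states, a nonempty set
of actions, and an outcome function for the grand coalition.  Joint actions of
a coalition C are functions C → Act; action profiles are functions Agent → Act. -/
structure Frame (Agent : Type) where
  State : Type
  state_nonempty : Nonempty State
  Act : Type
  act_nonempty : Nonempty Act
  out : State → (Agent → Act) → Set State

namespace Frame

variable {Agent : Type} (F : Frame Agent)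

/-- Outcome function for a coalition C. -/
def outC (C : Set Agent) (s : F.State) (σ : C → F.Act) : Set F.State :=
  ⋃ (τ : Agent → F.Act) (_ : ∀ a : C, τ a.1 = σ a), F.out s τ

/-- Availability function: the available joint actions of C at s. -/
def aja (C : Set Agent) (s : F.State) : Set (C → F.Act) :=
  {σ | (F.outC C s σ).Nonempty}

def Serial : Prop := ∀ (s : F.State) (C : Set Agent), (F.aja C s).Nonempty

def Independent : Prop :=
  ∀ (s : F.State) (C D : Set Agent), C ∩ D = ∅ →
    ∀ σC ∈ F.aja C s, ∀ σD ∈ F.aja D s, jaUnion σC σD ∈ F.aja (C ∪ D) s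

def Deterministic : Prop :=
  ∀ s : F.State, ∀ σ ∈ F.aja Set.univ s, ∃ t : F.State, F.outC Set.univ s σ = {t}

end Frame

/-- A general concurrent game model: a frame together with a labeling function
(atomic propositions are drawn from the countable set ℕ). -/
structure Model (Agent : Type) extends Frame Agent where
  lab : State → Set ℕ

namespace Model

variable {Agent : Type} (M : Model Agent)

/-- Satisfaction: M, s ⊨ φ. -/
def sat : Formula Agent → M.State → Prop
  | .top, _ => True
  | .atom n, s => n ∈ M.lab s
  | .neg φ, s => ¬ sat φ s
  | .and φ ψ, s => sat φ s ∧ sat ψ s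
  | .coal C φ, s => ∃ σ ∈ M.toFrame.aja C s, ∀ t ∈ M.toFrame.outC C s σ, sat φ t

/-- M is an X-model (for X ∈ ES). -/
def IsX (X : Set P3) : Prop :=
  (P3.S ∈ X → M.toFrame.Serial) ∧ (P3.I ∈ X → M.toFrame.Independent) ∧
    (P3.D ∈ X → M.toFrame.Deterministic)

end Model

/-- φ is X-valid: φ holds at every pointed X-model. -/
def XValid {Agent : Type} (X : Set P3) (φ : Formula Agent) : Prop :=
  ∀ M : Model Agent, M.IsX X → ∀ s : M.State, M.sat φ s

/-- φ is X-satisfiable: φ holds at some pointed X-model. -/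
def XSat {Agent : Type} (X : Set P3) (φ : Formula Agent) : Prop :=
  ∃ M : Model Agent, M.IsX X ∧ ∃ s : M.State, M.sat φ s

/-- φ ⊨_XL ψ : ψ holds at every pointed X-model at which φ holds. -/
def XConseq {Agent : Type} (X : Set P3) (φ ψ : Formula Agent) : Prop :=
  ∀ M : Model Agent, M.IsX X → ∀ s : M.State, M.sat φ s → M.sat ψ s
def bigConj {Agent : Type} (l : List (Formula Agent)) : Formula Agent :=
  l.foldr Formula.and Formula.top

def bigDisj {Agent : Type} (l : List (Formula Agent)) : Formula Agent :=
  l.foldr Formula.or Formula.bot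

inductive IsLiteral {Agent : Type} : Formula Agent → Prop
  | pos (n : ℕ) : IsLiteral (Formula.atom n)
  | neg (n : ℕ) : IsLiteral (Formula.neg (Formula.atom n))

/-- An elementary disjunction: a disjunction of propositional literals. -/
inductive IsElemDisj {Agent : Type} : Formula Agent → Prop
  | lit {φ : Formula Agent} : IsLiteral φ → IsElemDisj φ
  | or {φ ψ : Formula Agent} : IsElemDisj φ → IsElemDisj ψ → IsElemDisj (φ.or ψ)

/-- An elementary conjunction: a conjunction of propositional literals. -/
inductive IsElemConj {Agent : Type} : Formula Agent → Prop
  | lit {φ : Formula Agent} : IsLiteral φ → IsElemConj φ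
  | and {φ ψ : Formula Agent} : IsElemConj φ → IsElemConj ψ → IsElemConj (φ.and ψ)

/-- The data of a standard disjunction γ ∨ (⋀_{i∈NI}⟨A_i⟩φ_i → ⋁_{j∈PI}⟨B_j⟩ψ_j):
NI is represented by `Fin n` (possibly empty) and PI by `Fin (m+1)` (nonempty);
(1) if NI ≠ ∅ then ⟨A_i⟩φ_i = ⟨∅⟩⊤ for some i ∈ NI, and (2) ⟨B_0⟩ψ_0 = ⟨AG⟩⊥. -/
structure StdDisj (Agent : Type) where
  γ : Formula Agent
  hγ : IsElemDisj γ
  n : ℕ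
  m : ℕ
  A : Fin n → Set Agent
  φ : Fin n → Formula Agent
  B : Fin (m + 1) → Set Agent
  ψ : Fin (m + 1) → Formula Agent
  hNI : n ≠ 0 → ∃ i : Fin n, A i = ∅ ∧ φ i = Formula.top
  hB0 : B 0 = Set.univ
  hψ0 : ψ 0 = Formula.bot

namespace StdDisj

variable {Agent : Type} (d : StdDisj Agent)

/-- The formula γ ∨ (⋀_{i∈NI}⟨A_i⟩φ_i → ⋁_{j∈PI}⟨B_j⟩ψ_j). -/
def toFormula : Formula Agent :=
  d.γ.or
    ((bigConj ((List.finRange d.n).map fun i => Formula.coal (d.A i) (d.φ i))).imp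
      (bigDisj ((List.finRange (d.m + 1)).map fun j => Formula.coal (d.B j) (d.ψ j))))

/-- N ⊆ NI is X-neat. -/
def Neat (X : Set P3) (N : Finset (Fin d.n)) : Prop :=
  (∀ i ∈ N, ∀ i' ∈ N, i ≠ i' → d.A i ∩ d.A i' = ∅) ∧
    (P3.S ∉ X → N.Nonempty) ∧
    (P3.I ∉ X → ∀ i ∈ N, ∀ i' ∈ N, d.A i ≠ ∅ → d.A i' ≠ ∅ → i = i')

/-- The set of basic positive indices `PI₀ = { j ∈ PI : B_j = AG }`. -/
noncomputable def PI0 : Finset (Fin (d.m + 1)) :=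
  letI := Classical.decPred fun j : Fin (d.m + 1) => d.B j = Set.univ
  Finset.univ.filter fun j => d.B j = Set.univ

end StdDisj

/-- A blueprint π = (AG, AC₀, list_AG): a nonempty action set AC₀ and a listing
function for the grand coalition (joint actions taken over AC₀). -/
structure Blueprint (Agent : Type) where
  Act : Type
  act_nonempty : Nonempty Act
  listAG : (↥(Set.univ : Set Agent) → Act) → Set (Formula Agent)

namespace Blueprint

variable {Agent : Type} (bp : Blueprint Agent)

/-- The listing function for a coalition C:
list_C(σ_C) = ⋃ { list_AG(σ_AG) : σ_AG ∈ JA_AG, σ_C ⊆ σ_AG }. -/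
def listC (C : Set Agent) (σ : C → bp.Act) : Set (Formula Agent) :=
  ⋃ (τ : ↥(Set.univ : Set Agent) → bp.Act)
    (_ : ∀ a : C, τ ⟨a.1, Set.mem_univ a.1⟩ = σ a), bp.listAG τ

/-- The set of performable joint actions of C. -/
def PJA (C : Set Agent) : Set (C → bp.Act) := {σ | (bp.listC C σ).Nonempty}

/-- The blueprint is X-regular. -/
def Regular (X : Set P3) : Prop :=
  (∀ (C : Set Agent) (σ : C → bp.Act), ∀ χ ∈ bp.listC C σ, XSat X χ) ∧
    (P3.S ∈ X → ∀ C : Set Agent, (bp.PJA C).Nonempty) ∧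
    (P3.I ∈ X → ∀ (C D : Set Agent), C ∩ D = ∅ →
      ∀ σC ∈ bp.PJA C, ∀ σD ∈ bp.PJA D, jaUnion σC σD ∈ bp.PJA (C ∪ D)) ∧
    (P3.D ∈ X → ∀ σ ∈ bp.PJA (Set.univ : Set Agent),
      ∃ χ : Formula Agent, bp.listAG σ = {χ})

/-- The ensuring function A_X: the formulas that are X-logical consequences of
every formula in list_C(σ_C). -/
def ens (X : Set P3) (C : Set Agent) (σ : C → bp.Act) : Set (Formula Agent) :=
  {ψ | ∀ φ ∈ bp.listC C σ, XConseq X φ ψ}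

/-- The enabling function E_X: the formulas that are X-logical consequences of
some formula in list_C(σ_C). -/
def ena (X : Set P3) (C : Set Agent) (σ : C → bp.Act) : Set (Formula Agent) :=
  {ψ | ∃ φ ∈ bp.listC C σ, XConseq X φ ψ}

end Blueprint

/-- (M, s₀) realizes the blueprint bp and the elementary conjunction γ:
there is an embedding ι of bp's actions into M's actions (AC₀ ⊆ AC) such that
(2) aja_C(s₀) = PJA_C for every C ⊆ AG; (3) M, s₀ ⊨ γ; (4) every joint action
σ_C ensures at (M,s₀) every ψ ∈ A_X(σ_C); (5) every joint action σ_C enables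
at (M,s₀) every ψ ∈ E_X(σ_C). -/
def Realizes {Agent : Type} (X : Set P3) (bp : Blueprint Agent)
    (γ : Formula Agent) (M : Model Agent) (s₀ : M.State) : Prop :=
  ∃ ι : bp.Act ↪ M.Act,
    (∀ C : Set Agent,
      M.toFrame.aja C s₀ = (fun σ : C → bp.Act => ⇑ι ∘ σ) '' bp.PJA C) ∧
    M.sat γ s₀ ∧
    (∀ (C : Set Agent) (σ : C → bp.Act), ∀ ψ ∈ bp.ens X C σ,
      ∀ t ∈ M.toFrame.outC C s₀ (⇑ι ∘ σ), M.sat ψ t) ∧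
    (∀ (C : Set Agent) (σ : C → bp.Act), ∀ ψ ∈ bp.ena X C σ,
      ∃ t ∈ M.toFrame.outC C s₀ (⇑ι ∘ σ), M.sat ψ t)

section Gluing

variable {Agent : Type}

/-- The game of `F` at `s` is a copy of the game of `G` at `r`: actions are transported along
`ι`, outcomes along `j`, and profiles using an action outside the range of `ι` have no outcome. -/
def IsCopy (G F : Frame Agent) (r : G.State) (s : F.State)
    (ι : G.Act ↪ F.Act) (j : G.State → F.State) : Prop :=
  ∀ τ : Agent → F.Act, F.out s τ = {v | ∃ τ' : Agent → G.Act, τ = ι ∘ τ' ∧ v ∈ j '' G.out r τ'}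

theorem mem_outC {F : Frame Agent} {C : Set Agent} {s : F.State} {σ : C → F.Act} {v : F.State} :
    v ∈ F.outC C s σ ↔ ∃ τ : Agent → F.Act, (∀ a : C, τ a.1 = σ a) ∧ v ∈ F.out s τ := by
  simp [Frame.outC]

namespace IsCopy

variable {G F : Frame Agent} {r : G.State} {s : F.State} {ι : G.Act ↪ F.Act}
  {j : G.State → F.State}

theorem outC_eq (h : IsCopy G F r s ι j) (C : Set Agent) (σ : C → G.Act) :
    F.outC C s (ι ∘ σ) = j '' G.outC C r σ := by
  ext v
  simp only [mem_outC, Set.mem_image]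
  constructor
  · rintro ⟨τ, hτ, hv⟩
    rw [h τ] at hv
    obtain ⟨τ', rfl, u, hu, rfl⟩ := hv
    exact ⟨u, ⟨τ', fun a => ι.injective (hτ a), hu⟩, rfl⟩
  · rintro ⟨u, ⟨τ', hτ', hu⟩, rfl⟩
    refine ⟨ι ∘ τ', fun a => congrArg ι (hτ' a), ?_⟩
    rw [h]
    exact ⟨τ', rfl, u, hu, rfl⟩

theorem comp_mem_aja (h : IsCopy G F r s ι j) {C : Set Agent} {σ : C → G.Act}
    (hσ : σ ∈ G.aja C r) : (ι ∘ σ : C → F.Act) ∈ F.aja C s := by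
  change (F.outC C s (ι ∘ σ)).Nonempty
  rw [h.outC_eq]
  exact Set.Nonempty.image j hσ

theorem exists_of_mem_aja (h : IsCopy G F r s ι j) {C : Set Agent} {σ : C → F.Act}
    (hσ : σ ∈ F.aja C s) : ∃ σ' ∈ G.aja C r, ι ∘ σ' = σ := by
  obtain ⟨v, hv⟩ := hσ
  obtain ⟨τ, hτ, hv⟩ := mem_outC.1 hv
  rw [h τ] at hv
  obtain ⟨τ', rfl, u, hu, rfl⟩ := hv
  exact ⟨fun a => τ' a.1, ⟨u, mem_outC.2 ⟨τ', fun _ => rfl, hu⟩⟩, funext hτ⟩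

theorem aja_eq (h : IsCopy G F r s ι j) (C : Set Agent) :
    F.aja C s = (fun σ : C → G.Act => ι ∘ σ) '' G.aja C r := by
  ext σ
  constructor
  · exact h.exists_of_mem_aja
  · rintro ⟨σ', hσ', rfl⟩
    exact h.comp_mem_aja hσ'

end IsCopy

theorem comp_jaUnion {A B : Type} {C D : Set Agent} (f : A → B) (σC : C → A) (σD : D → A) :
    jaUnion (f ∘ σC) (f ∘ σD) = f ∘ jaUnion σC σD := by
  funext a
  by_cases h : a.1 ∈ C <;> simp [jaUnion, h]

/-- The requirements that `X` imposes on the game played at the single state `s`. -/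
def LocX (X : Set P3) (F : Frame Agent) (s : F.State) : Prop :=
  (P3.S ∈ X → ∀ C : Set Agent, (F.aja C s).Nonempty) ∧
  (P3.I ∈ X → ∀ C D : Set Agent, C ∩ D = ∅ →
    ∀ σC ∈ F.aja C s, ∀ σD ∈ F.aja D s, jaUnion σC σD ∈ F.aja (C ∪ D) s) ∧
  (P3.D ∈ X → ∀ σ ∈ F.aja Set.univ s, ∃ t : F.State, F.outC Set.univ s σ = {t})

theorem isX_iff_locX {X : Set P3} {M : Model Agent} :
    M.IsX X ↔ ∀ s, LocX X M.toFrame s :=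
  ⟨fun h s => ⟨fun hS => h.1 hS s, fun hI => h.2.1 hI s, fun hD => h.2.2 hD s⟩,
    fun h => ⟨fun hS s => (h s).1 hS, fun hI s => (h s).2.1 hI, fun hD s => (h s).2.2 hD⟩⟩

theorem IsCopy.locX {X : Set P3} {G F : Frame Agent} {r : G.State} {s : F.State}
    {ι : G.Act ↪ F.Act} {j : G.State → F.State} (h : IsCopy G F r s ι j)
    (hG : LocX X G r) : LocX X F s := by
  refine ⟨fun hS C => ?_, fun hI C D hCD σC hC σD hD => ?_, fun hD σ hσ => ?_⟩
  · obtain ⟨σ, hσ⟩ := hG.1 hS C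
    exact ⟨_, h.comp_mem_aja hσ⟩
  · obtain ⟨σC, hC', rfl⟩ := h.exists_of_mem_aja hC
    obtain ⟨σD, hD', rfl⟩ := h.exists_of_mem_aja hD
    rw [comp_jaUnion]
    exact h.comp_mem_aja (hG.2.1 hI C D hCD σC hC' σD hD')
  · obtain ⟨σ, hσ', rfl⟩ := h.exists_of_mem_aja hσ
    obtain ⟨t, ht⟩ := hG.2.2 hD σ hσ'
    exact ⟨j t, by rw [h.outC_eq, ht, Set.image_singleton]⟩

/-- Satisfaction is invariant under a map `j` along which every state carries a copy of the
original game and the original label. -/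
theorem sat_copy {N M : Model Agent} {ι : N.Act ↪ M.Act} {j : N.State → M.State}
    (h : ∀ r, IsCopy N.toFrame M.toFrame r (j r) ι j) (hlab : ∀ r, M.lab (j r) = N.lab r)
    (φ : Formula Agent) (r : N.State) : M.sat φ (j r) ↔ N.sat φ r := by
  induction φ generalizing r with
  | top => exact Iff.rfl
  | atom n => simp only [Model.sat, hlab]
  | neg φ ih => simp only [Model.sat, ih]
  | and φ ψ ih₁ ih₂ => simp only [Model.sat, ih₁, ih₂]
  | coal C φ ih =>
    simp only [Model.sat, (h r).aja_eq, Set.exists_mem_image, (h r).outC_eq, Set.forall_mem_image,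
      ih]

theorem IsElemConj.sat_congr {γ : Formula Agent} (hγ : IsElemConj γ) {N M : Model Agent}
    {r : N.State} {s : M.State} (hlab : M.lab s = N.lab r) : M.sat γ s ↔ N.sat γ r := by
  induction hγ with
  | lit h => cases h <;> simp only [Model.sat, hlab]
  | and _ _ ih₁ ih₂ => simp only [Model.sat, ih₁, ih₂]

/-- The blueprint read as a frame whose states are formulas, the outcomes of a profile being the
formulas it lists; only the game played is relevant, and it is the same at every state. -/
abbrev bpFrame (bp : Blueprint Agent) : Frame Agent where
  State := Formula Agent
  state_nonempty := ⟨Formula.top⟩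
  Act := bp.Act
  act_nonempty := bp.act_nonempty
  out _ τ := bp.listAG fun a => τ a.1

theorem bpFrame_outC (bp : Blueprint Agent) (C : Set Agent) (χ : Formula Agent)
    (σ : C → bp.Act) : (bpFrame bp).outC C χ σ = bp.listC C σ := by
  refine Set.ext fun (v : Formula Agent) => ?_
  refine mem_outC.trans ?_
  simp only [Blueprint.listC, Set.mem_iUnion, exists_prop]
  constructor
  · rintro ⟨τ, hτ, hv⟩
    exact ⟨fun a => τ a.1, hτ, hv⟩
  · rintro ⟨τ, hτ, hv⟩
    exact ⟨fun a => τ ⟨a, Set.mem_univ a⟩, hτ, hv⟩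

theorem bpFrame_aja (bp : Blueprint Agent) (C : Set Agent) (χ : Formula Agent) :
    (bpFrame bp).aja C χ = bp.PJA C := by
  ext σ
  change ((bpFrame bp).outC C χ σ).Nonempty ↔ (bp.listC C σ).Nonempty
  rw [bpFrame_outC]

theorem listC_univ (bp : Blueprint Agent) (σ : ↥(Set.univ : Set Agent) → bp.Act) :
    bp.listC Set.univ σ = bp.listAG σ := by
  refine Set.ext fun v => ?_
  simp only [Blueprint.listC, Set.mem_iUnion, exists_prop]
  constructor
  · rintro ⟨τ, hτ, hv⟩
    rwa [← show τ = σ from funext hτ]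
  · exact fun hv => ⟨σ, fun _ => rfl, hv⟩

theorem bpFrame_locX {X : Set P3} {bp : Blueprint Agent} (hbp : bp.Regular X)
    (χ : Formula Agent) : LocX X (bpFrame bp) χ := by
  obtain ⟨-, hS, hI, hD⟩ := hbp
  refine ⟨fun h C => ?_, fun h C D hCD σC hσC σD hσD => ?_, fun h σ hσ => ?_⟩
  · rw [bpFrame_aja]
    exact hS h C
  · rw [bpFrame_aja] at *
    exact hI h C D hCD σC hσC σD hσD
  · rw [bpFrame_aja] at hσ
    obtain ⟨t, ht⟩ := hD h σ hσ
    refine ⟨t, ?_⟩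
    rw [bpFrame_outC, listC_univ, ht]

/-- The glued model: the disjoint union of the models `N χ` together with a new root `none`
labelled `L`. At the root the game is that of the blueprint, a listed formula `χ` leading to the
state `p χ` of `N χ`; inside `N χ` only the actions of `N χ` have outcomes. -/
def glue (bp : Blueprint Agent) (N : Formula Agent → Model Agent) (p : ∀ χ, (N χ).State)
    (L : Set ℕ) : Model Agent where
  State := Option (Σ χ, (N χ).State)
  state_nonempty := ⟨none⟩
  Act := bp.Act ⊕ Σ χ, (N χ).Act
  act_nonempty := bp.act_nonempty.map Sum.inl
  out s τ := match s with
    | none => {v | ∃ τ' : Agent → bp.Act, τ = Sum.inl ∘ τ' ∧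
        v ∈ (fun χ => some ⟨χ, p χ⟩) '' bp.listAG fun a => τ' a.1}
    | some ⟨χ, r⟩ => {v | ∃ τ' : Agent → (N χ).Act, τ = (fun c => Sum.inr ⟨χ, c⟩) ∘ τ' ∧
        v ∈ (fun u => some ⟨χ, u⟩) '' (N χ).out r τ'}
  lab s := match s with
    | none => L
    | some ⟨χ, r⟩ => (N χ).lab r

variable (bp : Blueprint Agent) (N : Formula Agent → Model Agent) (p : ∀ χ, (N χ).State)
  (L : Set ℕ)

/-- The actions of `N χ` as actions of the glued model. -/
def actEmb (χ : Formula Agent) : (N χ).Act ↪ (glue bp N p L).Act :=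
  ⟨fun c => Sum.inr ⟨χ, c⟩, fun _ _ h => eq_of_heq (Sigma.mk.inj (Sum.inr.inj h)).2⟩

theorem glue_root_copy : IsCopy (bpFrame bp) (glue bp N p L).toFrame Formula.top none
    (Function.Embedding.inl : bp.Act ↪ bp.Act ⊕ Σ χ, (N χ).Act) (fun χ => some ⟨χ, p χ⟩) :=
  fun _ => rfl

theorem glue_copy (χ : Formula Agent) (r : (N χ).State) :
    IsCopy (N χ).toFrame (glue bp N p L).toFrame r (some ⟨χ, r⟩)
      (actEmb bp N p L χ) (fun u => some ⟨χ, u⟩) :=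
  fun _ => rfl

theorem glue_sat (χ φ : Formula Agent) (r : (N χ).State) :
    (glue bp N p L).sat φ (some ⟨χ, r⟩) ↔ (N χ).sat φ r :=
  sat_copy (M := glue bp N p L) (j := fun u => some ⟨χ, u⟩) (glue_copy bp N p L χ)
    (fun _ => rfl) φ r

end Gluing

/-- Realizability of blueprints: for every X ∈ ES, every X-regular blueprint
and every X-satisfiable elementary conjunction γ, there is a pointed X-model
realizing them. -/
theorem realizability_of_blueprints {Agent : Type} [Fintype Agent] (X : Set P3)
    (bp : Blueprint Agent) (hbp : bp.Regular X)
    (γ : Formula Agent) (hγ : IsElemConj γ) (hγsat : XSat X γ) :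
    ∃ (M : Model Agent) (s₀ : M.State), M.IsX X ∧ Realizes X bp γ M s₀ := by
  obtain ⟨M₀, hM₀, s₀, hs₀⟩ := hγsat
  -- `M₀` serves as an arbitrary `X`-model for the formulas that are not `X`-satisfiable.
  have key : ∀ χ : Formula Agent, ∃ (M : Model Agent) (s : M.State),
      M.IsX X ∧ (XSat X χ → M.sat χ s) := by
    intro χ
    by_cases h : XSat X χ
    · obtain ⟨M, hM, s, hs⟩ := h
      exact ⟨M, s, hM, fun _ => hs⟩
    · exact ⟨M₀, s₀, hM₀, fun h' => absurd h' h⟩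
  choose N p hN hp using key
  have hroot := glue_root_copy bp N p (M₀.lab s₀)
  refine ⟨glue bp N p (M₀.lab s₀), none, isX_iff_locX.2 ?_,
    (Function.Embedding.inl : bp.Act ↪ bp.Act ⊕ Σ χ, (N χ).Act), fun C => ?_,
    (hγ.sat_congr (N := M₀) (r := s₀) (M := glue bp N p (M₀.lab s₀)) (s := none) rfl).2 hs₀,
    fun C σ ψ hψ t ht => ?_, fun C σ ψ hψ => ?_⟩
  · rintro (_ | ⟨χ, r⟩)
    · exact hroot.locX (bpFrame_locX hbp _)
    · exact (glue_copy bp N p _ χ r).locX (isX_iff_locX.1 (hN χ) r)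
  · rw [hroot.aja_eq, bpFrame_aja]
  · have ht' := (hroot.outC_eq C σ).subset ht
    rw [bpFrame_outC] at ht'
    obtain ⟨χ, hχ, rfl⟩ := ht'
    exact (glue_sat bp N p _ χ ψ (p χ)).2
      (hψ χ hχ (N χ) (hN χ) (p χ) (hp χ (hbp.1 C σ χ hχ)))
  · obtain ⟨χ, hχ, hcons⟩ := hψ
    refine ⟨some ⟨χ, p χ⟩, (hroot.outC_eq C σ).superset ⟨χ, ?_, rfl⟩,
      (glue_sat bp N p _ χ ψ (p χ)).2
        (hcons (N χ) (hN χ) (p χ) (hp χ (hbp.1 C σ χ hχ)))⟩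
    rw [bpFrame_outC]
    exact hχ

end CL
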